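/- For every complex number q with |q| < 1, φ(q³)² = G(q³)·φ(q⁹)·b(q⁹) − q³·H(q³)·φ(q⁹)·a(q⁹). (The reduced form of the Ramanujan identity obtained in the proof of Theorem 3.1 after discarding the vanishing residue classes, equations (3.25)–(3.29).) -/

import Mathlib

open scoped BigOperators

/-- The Euler function `φ(q) = ∏_{n=1}^∞ (1 - q^n)`. -/
noncomputable def eulerPhi (q : ℂ) : ℂ := ∏' n : ℕ, (1 - q ^ (n + 1))

/-- The first Rogers–Ramanujan series
`a(q) = ∏_{n=1}^∞ 1/((1 - q^{5n-2})(1 - q^{5n-3}))`. -/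
noncomputable def rrA (q : ℂ) : ℂ :=
  ∏' n : ℕ, ((1 - q ^ (5 * n + 3)) * (1 - q ^ (5 * n + 2)))⁻¹

/-- The second Rogers–Ramanujan series
`b(q) = ∏_{n=1}^∞ 1/((1 - q^{5n-1})(1 - q^{5n-4}))`. -/
noncomputable def rrB (q : ℂ) : ℂ :=
  ∏' n : ℕ, ((1 - q ^ (5 * n + 4)) * (1 - q ^ (5 * n + 1)))⁻¹

/-- `G(q) = ∏_{n=1}^∞ (1-q^{15n})(1-q^{15n-7})(1-q^{15n-8})
          - q ∏_{n=1}^∞ (1-q^{15n})(1-q^{15n-13})(1-q^{15n-2})`. -/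
noncomputable def Gf (q : ℂ) : ℂ :=
  (∏' n : ℕ, (1 - q ^ (15 * n + 15)) * (1 - q ^ (15 * n + 8)) * (1 - q ^ (15 * n + 7)))
  - q * ∏' n : ℕ, (1 - q ^ (15 * n + 15)) * (1 - q ^ (15 * n + 2)) * (1 - q ^ (15 * n + 13))

/-- `H(q) = ∏_{n=1}^∞ (1-q^{15n})(1-q^{15n-4})(1-q^{15n-11})
          + q ∏_{n=1}^∞ (1-q^{15n})(1-q^{15n-14})(1-q^{15n-1})`. -/
noncomputable def Hf (q : ℂ) : ℂ :=
  (∏' n : ℕ, (1 - q ^ (15 * n + 15)) * (1 - q ^ (15 * n + 11)) * (1 - q ^ (15 * n + 4)))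
  + q * ∏' n : ℕ, (1 - q ^ (15 * n + 15)) * (1 - q ^ (15 * n + 1)) * (1 - q ^ (15 * n + 14))

/-!
With `θ(q, z) = ∑ₙ (-1)ⁿ q^{n(n-1)/2} zⁿ`, Jacobi's triple product gives `φ(x) = θ(x³, x)`, so
`φ(x)²` is a double sum over `ℤ × ℤ`. The lattice spanned by `(2, 1)` and `(-1, 2)` is a copy of
`ℤ × ℤ` scaled by `√5`, so on each of its five cosets the double sum factors into two theta series
with base `x¹⁵`. One coset contributes a multiple of `θ(x¹⁵, 1) = 0`. By the triple product again
`θ(x¹⁵, x⁶) = φ(x³) b(x³)` and `θ(x¹⁵, x³) = φ(x³) a(x³)`, and the coefficients of these two in the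
other four contributions are `G(x)` and `-x H(x)`. The theorem is the case `x = q³`.
-/

open Filter Finset Topology

section QPochhammer

variable {𝕜 : Type*}

/-- The finite `q`-Pochhammer symbol `(a; q)ₙ`. -/
def qPochhammer [CommRing 𝕜] (a q : 𝕜) (n : ℕ) : 𝕜 := ∏ i ∈ range n, (1 - a * q ^ i)

/-- The infinite `q`-Pochhammer symbol `(a; q)_∞`. -/
noncomputable def qPochhammerInf [NormedField 𝕜] (a q : 𝕜) : 𝕜 := ∏' i : ℕ, (1 - a * q ^ i)

/-- The reciprocal `1 / (q; q)ₙ` for an integer `n`, with the usual convention that it vanishes for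
negative `n`. -/
def invQFactorial [Field 𝕜] (q : 𝕜) : ℤ → 𝕜
  | .ofNat n => (qPochhammer q q n)⁻¹
  | .negSucc _ => 0

lemma qPochhammer_zero [CommRing 𝕜] (a q : 𝕜) : qPochhammer a q 0 = 1 :=
  prod_range_zero _

lemma qPochhammer_succ [CommRing 𝕜] (a q : 𝕜) (n : ℕ) :
    qPochhammer a q (n + 1) = qPochhammer a q n * (1 - a * q ^ n) :=
  prod_range_succ _ _

section Field

variable [Field 𝕜] {q : 𝕜}

lemma one_sub_pow_succ_ne_zero (hq : ¬IsOfFinOrder q) (n : ℕ) : 1 - q ^ (n + 1) ≠ 0 := fun h ↦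
  hq <| isOfFinOrder_iff_pow_eq_one.mpr ⟨n + 1, n.succ_pos, (sub_eq_zero.mp h).symm⟩

lemma invQFactorial_natCast (q : 𝕜) (n : ℕ) : invQFactorial q n = (qPochhammer q q n)⁻¹ := rfl

lemma invQFactorial_of_neg (q : 𝕜) {n : ℤ} (hn : n < 0) : invQFactorial q n = 0 := by
  obtain ⟨m, rfl⟩ := Int.eq_negSucc_of_lt_zero hn
  rfl

lemma invQFactorial_eq (hq : ¬IsOfFinOrder q) (n : ℤ) :
    invQFactorial q n = (1 - q ^ (n + 1)) * invQFactorial q (n + 1) := by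
  rcases lt_trichotomy n (-1) with h | rfl | h
  · rw [invQFactorial_of_neg q (by lia), invQFactorial_of_neg q (by lia), mul_zero]
  · simp [invQFactorial_of_neg]
  · lift n to ℕ using by lia
    have hne := one_sub_pow_succ_ne_zero hq n
    have hsucc : (n : ℤ) + 1 = (n + 1 : ℕ) := by push_cast; rfl
    rw [hsucc, zpow_natCast, invQFactorial_natCast, invQFactorial_natCast, qPochhammer_succ,
      ← pow_succ', mul_inv, mul_left_comm, mul_inv_cancel₀ hne, mul_one]

end Field

section NormedField

variable [NormedField 𝕜] {q : 𝕜}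

lemma not_isOfFinOrder_of_norm_lt_one (hq : ‖q‖ < 1) : ¬IsOfFinOrder q := by
  rw [isOfFinOrder_iff_pow_eq_one]
  rintro ⟨n, hn, h⟩
  have := pow_lt_one₀ (norm_nonneg q) hq hn.ne'
  simp [← norm_pow, h] at this

lemma norm_pow_lt_one (hq : ‖q‖ < 1) {m : ℕ} (hm : m ≠ 0) : ‖q ^ m‖ < 1 :=
  norm_pow q m ▸ pow_lt_one₀ (norm_nonneg q) hq hm

lemma summable_norm_neg_mul_pow (a : 𝕜) (hq : ‖q‖ < 1) : Summable fun i : ℕ ↦ ‖-(a * q ^ i)‖ := by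
  simpa only [norm_neg, norm_mul, norm_pow] using
    (summable_geometric_of_lt_one (norm_nonneg q) hq).mul_left ‖a‖

lemma qPochhammerInf_one_left (q : 𝕜) : qPochhammerInf 1 q = 0 :=
  (hasProd_zero_of_exists_eq_zero ⟨0, by simp⟩).tprod_eq

lemma qPochhammerInf_pow_pow (q : 𝕜) (m k : ℕ) :
    qPochhammerInf (q ^ k) (q ^ m) = ∏' n : ℕ, (1 - q ^ (m * n + k)) :=
  tprod_congr fun n ↦ by rw [← pow_mul, ← pow_add, add_comm]

variable [CompleteSpace 𝕜]

lemma multipliable_one_sub_mul_pow (a : 𝕜) (hq : ‖q‖ < 1) :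
    Multipliable fun i : ℕ ↦ 1 - a * q ^ i := by
  simpa only [sub_eq_add_neg] using
    multipliable_one_add_of_summable (summable_norm_neg_mul_pow a hq)

lemma multipliable_one_sub_pow_mul_add (hq : ‖q‖ < 1) {m : ℕ} (hm : m ≠ 0) (k : ℕ) :
    Multipliable fun n : ℕ ↦ 1 - q ^ (m * n + k) :=
  (multipliable_one_sub_mul_pow (q ^ k) (norm_pow_lt_one hq hm)).congr fun n ↦ by
    rw [← pow_mul, ← pow_add, add_comm]

lemma tendsto_qPochhammer (a : 𝕜) (hq : ‖q‖ < 1) :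
    Tendsto (qPochhammer a q) atTop (𝓝 (qPochhammerInf a q)) :=
  (multipliable_one_sub_mul_pow a hq).hasProd.tendsto_prod_nat

lemma qPochhammerInf_ne_zero {a : 𝕜} (hq : ‖q‖ < 1) (h : ∀ i : ℕ, a * q ^ i ≠ 1) :
    qPochhammerInf a q ≠ 0 := by
  simp only [qPochhammerInf, sub_eq_add_neg]
  refine tprod_one_add_ne_zero_of_summable (fun i ↦ ?_) (summable_norm_neg_mul_pow a hq)
  rw [← sub_eq_add_neg]
  exact sub_ne_zero_of_ne (h i).symm

lemma qPochhammerInf_pow_pow_ne_zero (hq : ‖q‖ < 1) {m k : ℕ} (hm : m ≠ 0) (hk : k ≠ 0) :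
    qPochhammerInf (q ^ k) (q ^ m) ≠ 0 :=
  qPochhammerInf_ne_zero (norm_pow_lt_one hq hm) fun i h ↦
    not_isOfFinOrder_of_norm_lt_one hq <| isOfFinOrder_iff_pow_eq_one.mpr
      ⟨k + m * i, by lia, by rw [pow_add, pow_mul, h]⟩

lemma qPochhammerInf_mul_tprod_inv (hq : ‖q‖ < 1) {m k l : ℕ} (hm : m ≠ 0) (hk : k ≠ 0)
    (hl : l ≠ 0) :
    qPochhammerInf (q ^ k) (q ^ m) * qPochhammerInf (q ^ l) (q ^ m) *
      ∏' n : ℕ, ((1 - q ^ (m * n + k)) * (1 - q ^ (m * n + l)))⁻¹ = 1 := by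
  have hmul := multipliable_one_sub_pow_mul_add hq hm
  have hne : ∏' n : ℕ, (1 - q ^ (m * n + k)) * (1 - q ^ (m * n + l)) ≠ 0 := by
    rw [(hmul k).tprod_mul (hmul l), ← qPochhammerInf_pow_pow, ← qPochhammerInf_pow_pow]
    exact mul_ne_zero (qPochhammerInf_pow_pow_ne_zero hq hm hk)
      (qPochhammerInf_pow_pow_ne_zero hq hm hl)
  rw [((hmul k).mul (hmul l)).tprod_inv₀ hne, qPochhammerInf_pow_pow, qPochhammerInf_pow_pow,
    ← (hmul k).tprod_mul (hmul l), mul_inv_cancel₀ hne]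

lemma qPochhammerInf_self_ne_zero (hq : ‖q‖ < 1) : qPochhammerInf q q ≠ 0 := by
  simpa using qPochhammerInf_pow_pow_ne_zero hq one_ne_zero one_ne_zero

lemma qPochhammerInf_eq_prod (a : 𝕜) (hq : ‖q‖ < 1) {m : ℕ} (hm : m ≠ 0) :
    qPochhammerInf a q = ∏ r ∈ range m, qPochhammerInf (a * q ^ r) (q ^ m) := by
  have : NeZero m := ⟨hm⟩
  obtain ⟨e, he⟩ : ∃ e : Fin m × ℕ ≃ ℕ, ∀ r n, e (r, n) = r + m * n :=
    ⟨(Equiv.prodComm _ _).trans (Nat.divModEquiv m).symm, fun r n ↦ by simp; ring⟩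
  have hterm (r : Fin m) (n : ℕ) : 1 - a * q ^ e (r, n) = 1 - a * q ^ (r : ℕ) * (q ^ m) ^ n := by
    rw [he, pow_add, pow_mul, mul_assoc]
  have hfiber (r : Fin m) : Multipliable fun n ↦ 1 - a * q ^ e (r, n) := by
    simpa only [hterm] using
      multipliable_one_sub_mul_pow (a * q ^ (r : ℕ)) (norm_pow_lt_one hq hm)
  have hmul : Multipliable fun p ↦ 1 - a * q ^ e p :=
    (e.multipliable_iff (f := fun i ↦ 1 - a * q ^ i)).mpr (multipliable_one_sub_mul_pow a hq)
  calc qPochhammerInf a q = ∏' p, (1 - a * q ^ e p) := (e.tprod_eq fun i ↦ 1 - a * q ^ i).symm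
    _ = ∏' r, ∏' n, (1 - a * q ^ e (r, n)) := hmul.tprod_prod' hfiber
    _ = ∏ r : Fin m, qPochhammerInf (a * q ^ (r : ℕ)) (q ^ m) := by
      simp only [hterm, tprod_fintype, qPochhammerInf]
    _ = ∏ r ∈ range m, qPochhammerInf (a * q ^ r) (q ^ m) :=
      Fin.prod_univ_eq_prod_range (fun r ↦ qPochhammerInf (a * q ^ r) (q ^ m)) m

lemma tendsto_invQFactorial (hq : ‖q‖ < 1) :
    Tendsto (invQFactorial q) atTop (𝓝 (qPochhammerInf q q)⁻¹) := by
  rw [← Nat.map_cast_int_atTop, tendsto_map'_iff]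
  exact (tendsto_qPochhammer q hq).inv₀ (qPochhammerInf_self_ne_zero hq)

lemma exists_norm_invQFactorial_le (hq : ‖q‖ < 1) : ∃ C, ∀ n, ‖invQFactorial q n‖ ≤ C := by
  have hlim := (tendsto_qPochhammer q hq).inv₀ (qPochhammerInf_self_ne_zero hq)
  obtain ⟨C, hC⟩ := (Metric.isBounded_range_of_tendsto _ hlim).exists_norm_le
  refine ⟨C, fun n ↦ ?_⟩
  cases n with
  | ofNat n => exact hC _ ⟨n, rfl⟩
  | negSucc n => simpa [invQFactorial] using (norm_nonneg _).trans (hC _ ⟨0, rfl⟩)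

end NormedField

end QPochhammer

section Theta

variable {𝕜 : Type*}

/-- The `n`-th term `(-1)ⁿ q^{n(n-1)/2} zⁿ` of the Jacobi theta series. -/
def thetaTerm [Field 𝕜] (q z : 𝕜) (n : ℤ) : 𝕜 := (-1) ^ n * q ^ (n * (n - 1) / 2) * z ^ n

/-- The Jacobi theta series `∑ₙ (-1)ⁿ q^{n(n-1)/2} zⁿ` over all integers `n`; in Ramanujan's
notation this is `f(-z, -q/z)`. -/
noncomputable def theta [NormedField 𝕜] (q z : 𝕜) : 𝕜 := ∑' n, thetaTerm q z n

lemma two_mul_triangular (n : ℤ) : 2 * (n * (n - 1) / 2) = n * (n - 1) :=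
  Int.mul_ediv_cancel' n.even_mul_pred_self.two_dvd

section Field

variable [Field 𝕜] {q z : 𝕜}

lemma thetaTerm_zero (q z : 𝕜) : thetaTerm q z 0 = 1 := by simp [thetaTerm]

lemma thetaTerm_one (q z : 𝕜) : thetaTerm q z 1 = -z := by simp [thetaTerm]

lemma thetaTerm_neg (hq : q ≠ 0) (z : 𝕜) (n : ℤ) : thetaTerm q z (-n) = thetaTerm q (q / z) n := by
  have hexp : -n * (-n - 1) / 2 = n * (n - 1) / 2 + n := by
    linarith [two_mul_triangular n, two_mul_triangular (-n)]
  rw [thetaTerm, thetaTerm, hexp, zpow_add₀ hq, div_zpow, zpow_neg, zpow_neg, ← inv_zpow,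
    inv_neg_one]
  ring

lemma thetaTerm_neg_one (hq : q ≠ 0) (z : 𝕜) : thetaTerm q z (-1) = -(q / z) := by
  rw [thetaTerm_neg hq, thetaTerm_one]

lemma thetaTerm_ne_zero (hq : q ≠ 0) (hz : z ≠ 0) (n : ℤ) : thetaTerm q z n ≠ 0 := by
  simp [thetaTerm, zpow_ne_zero, hq, hz]

lemma thetaTerm_add_one (hq : q ≠ 0) (hz : z ≠ 0) (n : ℤ) :
    thetaTerm q z (n + 1) = -z * q ^ n * thetaTerm q z n := by
  have hexp : (n + 1) * (n + 1 - 1) / 2 = n * (n - 1) / 2 + n := by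
    linarith [two_mul_triangular n, two_mul_triangular (n + 1)]
  rw [thetaTerm, thetaTerm, hexp, zpow_add₀ hq, zpow_add_one₀ hz,
    zpow_add_one₀ (neg_ne_zero.mpr one_ne_zero)]
  ring

/-- The quadratic form `(a² + b²)/2` becomes `5(i² + j²)/2` on the lattice spanned by `(2, 1)` and
`(-1, 2)`, so a product of two theta terms restricted to a coset is again one, with base `q⁵`. -/
lemma thetaTerm_mul_thetaTerm (hq : q ≠ 0) (hz : z ≠ 0) {w : 𝕜} (hw : w ≠ 0) (r s i j : ℤ) :
    thetaTerm q z (2 * i - j + r) * thetaTerm q w (i + 2 * j + s) =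
      thetaTerm q z r * thetaTerm q w s *
        (thetaTerm (q ^ 5) (q ^ (2 * r + s + 1) * z ^ 2 * w) i *
          thetaTerm (q ^ 5) (q ^ (2 * s - r + 2) * w ^ 2 / z) j) := by
  have hexp : (2 * i - j + r) * (2 * i - j + r - 1) / 2 +
        (i + 2 * j + s) * (i + 2 * j + s - 1) / 2 =
      r * (r - 1) / 2 + s * (s - 1) / 2 + 5 * (i * (i - 1) / 2) + 5 * (j * (j - 1) / 2) +
        (2 * r + s + 1) * i + (2 * s - r + 2) * j := by
    linarith [two_mul_triangular (2 * i - j + r), two_mul_triangular (i + 2 * j + s),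
      two_mul_triangular r, two_mul_triangular s, two_mul_triangular i, two_mul_triangular j]
  have hsign : (-1 : 𝕜) ^ (2 * i - j + r) * (-1) ^ (i + 2 * j + s) =
      (-1) ^ r * (-1) ^ s * (-1) ^ i * (-1) ^ j := by
    have hone : (-1 : 𝕜) ≠ 0 := neg_ne_zero.mpr one_ne_zero
    have hexp : (2 * i - j + r) + (i + 2 * j + s) = r + s + i + j + 2 * i := by ring
    simp only [← zpow_add₀ hone, hexp, zpow_add₀ hone _ (2 * i), (even_two_mul i).neg_one_zpow,
      mul_one]
  have hqpow : q ^ ((2 * i - j + r) * (2 * i - j + r - 1) / 2) *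
        q ^ ((i + 2 * j + s) * (i + 2 * j + s - 1) / 2) =
      q ^ (r * (r - 1) / 2) * q ^ (s * (s - 1) / 2) * (q ^ 5) ^ (i * (i - 1) / 2) *
        (q ^ 5) ^ (j * (j - 1) / 2) * (q ^ (2 * r + s + 1)) ^ i * (q ^ (2 * s - r + 2)) ^ j := by
    simp only [← zpow_natCast q 5, ← zpow_mul, ← zpow_add₀ hq, Nat.cast_ofNat, hexp]
  have hzpow : z ^ (2 * i - j + r) = z ^ r * (z ^ 2) ^ i * (z ^ j)⁻¹ := by
    rw [zpow_add₀ hz, zpow_sub₀ hz, zpow_mul, zpow_ofNat]; ring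
  have hwpow : w ^ (i + 2 * j + s) = w ^ s * w ^ i * (w ^ 2) ^ j := by
    rw [zpow_add₀ hw, zpow_add₀ hw, zpow_mul, zpow_ofNat]; ring
  simp only [thetaTerm, hzpow, hwpow, mul_zpow, div_zpow]
  linear_combination
    (z ^ r * (z ^ 2) ^ i * (z ^ j)⁻¹ * (w ^ s * w ^ i * (w ^ 2) ^ j)) *
      (hsign * q ^ ((2 * i - j + r) * (2 * i - j + r - 1) / 2) *
        q ^ ((i + 2 * j + s) * (i + 2 * j + s - 1) / 2) +
      (-1) ^ r * (-1) ^ s * (-1) ^ i * (-1) ^ j * hqpow)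

/-- The terms of the finite form of Jacobi's triple product, which sum to
`(z; q)_b (q/z; q)_a / (q; q)_{a+b}`. They vanish unless `-a ≤ n ≤ b`. -/
def finThetaTerm (q z : 𝕜) (a b : ℕ) (n : ℤ) : 𝕜 :=
  thetaTerm q z n * (invQFactorial q (a + n) * invQFactorial q (b - n))

lemma finThetaTerm_neg (hq : q ≠ 0) (z : 𝕜) (a b : ℕ) (n : ℤ) :
    finThetaTerm q z a b (-n) = finThetaTerm q (q / z) b a n := by
  rw [finThetaTerm, finThetaTerm, thetaTerm_neg hq, sub_neg_eq_add, ← sub_eq_add_neg,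
    mul_comm (invQFactorial q (a - n))]

lemma finThetaTerm_succ_right (hq : q ≠ 0) (hroot : ¬IsOfFinOrder q) (hz : z ≠ 0) (a b : ℕ)
    (n : ℤ) :
    (1 - q ^ (a + b + 1)) * finThetaTerm q z a (b + 1) (n + 1) =
      finThetaTerm q z a b (n + 1) - z * q ^ b * finThetaTerm q z a b n := by
  have hb : ((b + 1 : ℕ) : ℤ) - (n + 1) = b - n := by push_cast; ring
  have hb' : (b : ℤ) - (n + 1) + 1 = b - n := by ring
  have hpow : q ^ (a + b + 1) = q ^ ((a : ℤ) + n + 1) * q ^ ((b : ℤ) - n) := by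
    rw [← zpow_add₀ hq, ← zpow_natCast]
    push_cast
    ring_nf
  have hpow' : q ^ b = q ^ n * q ^ ((b : ℤ) - n) := by
    rw [← zpow_add₀ hq, ← zpow_natCast]
    ring_nf
  simp only [finThetaTerm, hb, thetaTerm_add_one hq hz, ← add_assoc]
  rw [invQFactorial_eq hroot (a + n), invQFactorial_eq hroot (b - (n + 1)), hb', hpow, hpow']
  ring

variable [TopologicalSpace 𝕜]

lemma hasSum_finThetaTerm_swap (hq : q ≠ 0) {a b : ℕ} {S : 𝕜} :
    HasSum (finThetaTerm q (q / z) b a) S ↔ HasSum (finThetaTerm q z a b) S := by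
  rw [← (Equiv.neg ℤ).hasSum_iff (f := finThetaTerm q z a b)]
  exact iff_of_eq <| congrArg (HasSum · S) <| funext fun n ↦ (finThetaTerm_neg hq z a b n).symm

lemma hasSum_finThetaTerm_zero (q z : 𝕜) : HasSum (finThetaTerm q z 0 0) 1 := by
  have hzero : finThetaTerm q z 0 0 0 = 1 := by
    simp [finThetaTerm, thetaTerm_zero, invQFactorial, qPochhammer_zero]
  refine hzero ▸ hasSum_single 0 fun n hn ↦ ?_
  rcases hn.lt_or_gt with h | h <;> simp [finThetaTerm, invQFactorial_of_neg, h]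

variable [IsTopologicalRing 𝕜]

lemma hasSum_finThetaTerm_succ_right (hq : q ≠ 0) (hroot : ¬IsOfFinOrder q) (hz : z ≠ 0) {a b : ℕ}
    (h : HasSum (finThetaTerm q z a b)
      (qPochhammer z q b * qPochhammer (q / z) q a / qPochhammer q q (a + b))) :
    HasSum (finThetaTerm q z a (b + 1))
      (qPochhammer z q (b + 1) * qPochhammer (q / z) q a / qPochhammer q q (a + (b + 1))) := by
  have hne := one_sub_pow_succ_ne_zero hroot (a + b)
  have hshift := (Equiv.addRight (1 : ℤ)).hasSum_iff.mpr h
  rw [← (Equiv.addRight (1 : ℤ)).hasSum_iff]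
  convert (hshift.sub (h.mul_left (z * q ^ b))).div_const (1 - q ^ (a + b + 1)) using 1
  · funext n
    rw [eq_div_iff hne, mul_comm]
    exact finThetaTerm_succ_right hq hroot hz a b n
  · rw [← add_assoc, qPochhammer_succ, qPochhammer_succ q, ← pow_succ']
    field_simp

lemma hasSum_finThetaTerm (hq : q ≠ 0) (hroot : ¬IsOfFinOrder q) (hz : z ≠ 0) (a b : ℕ) :
    HasSum (finThetaTerm q z a b)
      (qPochhammer z q b * qPochhammer (q / z) q a / qPochhammer q q (a + b)) := by
  have left_zero {w : 𝕜} (hw : w ≠ 0) (c : ℕ) : HasSum (finThetaTerm q w 0 c)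
      (qPochhammer w q c * qPochhammer (q / w) q 0 / qPochhammer q q (0 + c)) := by
    induction c with
    | zero => simpa [qPochhammer_zero] using hasSum_finThetaTerm_zero q w
    | succ c ih => exact hasSum_finThetaTerm_succ_right hq hroot hw ih
  induction b with
  | zero =>
    have h := hasSum_finThetaTerm_swap hq |>.mp (left_zero (div_ne_zero hq hz) a)
    simpa [qPochhammer_zero] using h
  | succ b ih => exact hasSum_finThetaTerm_succ_right hq hroot hz ih

end Field

section NormedField

variable [NormedField 𝕜] {q z : 𝕜}

lemma theta_div (hq : q ≠ 0) (z : 𝕜) : theta q (q / z) = theta q z := by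
  simp only [theta, ← thetaTerm_neg hq]
  exact (Equiv.neg ℤ).tsum_eq (thetaTerm q z)

lemma summable_norm_thetaTerm_natCast (hq0 : q ≠ 0) (hq : ‖q‖ < 1) (hz : z ≠ 0) :
    Summable fun n : ℕ ↦ ‖thetaTerm q z n‖ := by
  have hne (n : ℕ) : ‖thetaTerm q z n‖ ≠ 0 := norm_ne_zero_iff.mpr (thetaTerm_ne_zero hq0 hz n)
  refine summable_of_ratio_test_tendsto_lt_one zero_lt_one (.of_forall hne) ?_
  have hratio (n : ℕ) : ‖thetaTerm q z (n + 1)‖ / ‖thetaTerm q z n‖ = ‖z‖ * ‖q‖ ^ n := by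
    rw [div_eq_iff (hne n), thetaTerm_add_one hq0 hz]
    simp
  simpa [hratio] using (tendsto_pow_atTop_nhds_zero_of_lt_one (norm_nonneg q) hq).const_mul ‖z‖

lemma summable_norm_thetaTerm (hq0 : q ≠ 0) (hq : ‖q‖ < 1) (hz : z ≠ 0) :
    Summable fun n ↦ ‖thetaTerm q z n‖ :=
  .of_nat_of_neg (summable_norm_thetaTerm_natCast hq0 hq hz) <| by
    simpa only [thetaTerm_neg hq0] using
      summable_norm_thetaTerm_natCast hq0 hq (div_ne_zero hq0 hz)

variable [CompleteSpace 𝕜]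

lemma tendsto_finThetaTerm (hq : ‖q‖ < 1) (z : 𝕜) (n : ℤ) :
    Tendsto (fun N : ℕ ↦ finThetaTerm q z N N n) atTop
      (𝓝 (thetaTerm q z n * ((qPochhammerInf q q)⁻¹ * (qPochhammerInf q q)⁻¹))) := by
  have hcast : Tendsto ((↑) : ℕ → ℤ) atTop atTop := tendsto_natCast_atTop_atTop
  have hadd := tendsto_atTop_add_const_right atTop n hcast
  have hsub := tendsto_atTop_add_const_right atTop (-n) hcast
  exact (((tendsto_invQFactorial hq).comp hadd).mul
    ((tendsto_invQFactorial hq).comp hsub)).const_mul _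

lemma tendsto_tsum_finThetaTerm (hq0 : q ≠ 0) (hq : ‖q‖ < 1) (hz : z ≠ 0) :
    Tendsto (fun N : ℕ ↦ ∑' n, finThetaTerm q z N N n) atTop
      (𝓝 (theta q z * ((qPochhammerInf q q)⁻¹ * (qPochhammerInf q q)⁻¹))) := by
  obtain ⟨C, hC⟩ := exists_norm_invQFactorial_le hq
  have hC0 : 0 ≤ C := (norm_nonneg _).trans (hC 0)
  rw [theta, ← tsum_mul_right]
  refine tendsto_tsum_of_dominated_convergence
    ((summable_norm_thetaTerm hq0 hq hz).mul_right (C * C)) (tendsto_finThetaTerm hq z)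
    (.of_forall fun N n ↦ ?_)
  rw [finThetaTerm, norm_mul, norm_mul]
  gcongr <;> exact hC _

/-- **Jacobi's triple product identity**. -/
theorem theta_eq_qPochhammerInf_mul (hq0 : q ≠ 0) (hq : ‖q‖ < 1) (hz : z ≠ 0) :
    theta q z = qPochhammerInf q q * qPochhammerInf z q * qPochhammerInf (q / z) q := by
  have hne := qPochhammerInf_self_ne_zero hq
  have hprod : Tendsto (fun N : ℕ ↦ ∑' n, finThetaTerm q z N N n) atTop
      (𝓝 (qPochhammerInf z q * qPochhammerInf (q / z) q / qPochhammerInf q q)) := by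
    simp only [(hasSum_finThetaTerm hq0 (not_isOfFinOrder_of_norm_lt_one hq) hz _ _).tsum_eq]
    exact ((tendsto_qPochhammer z hq).mul (tendsto_qPochhammer (q / z) hq)).div
      ((tendsto_qPochhammer q hq).comp (tendsto_id.atTop_add_atTop tendsto_id)) hne
  have := tendsto_nhds_unique (tendsto_tsum_finThetaTerm hq0 hq hz) hprod
  field_simp at this
  exact this

lemma theta_one (hq0 : q ≠ 0) (hq : ‖q‖ < 1) : theta q 1 = 0 := by
  rw [theta_eq_qPochhammerInf_mul hq0 hq one_ne_zero, qPochhammerInf_one_left, mul_zero, zero_mul]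

lemma theta_pow_add_pow (hq0 : q ≠ 0) (hq : ‖q‖ < 1) {k l : ℕ} (hkl : k + l ≠ 0) :
    theta (q ^ (k + l)) (q ^ k) = qPochhammerInf (q ^ (k + l)) (q ^ (k + l)) *
      qPochhammerInf (q ^ k) (q ^ (k + l)) * qPochhammerInf (q ^ l) (q ^ (k + l)) := by
  rw [theta_eq_qPochhammerInf_mul (pow_ne_zero _ hq0) (norm_pow_lt_one hq hkl) (pow_ne_zero _ hq0),
    pow_add, mul_div_cancel_left₀ _ (pow_ne_zero k hq0)]

lemma theta_pow_add_pow_eq_tprod (hq0 : q ≠ 0) (hq : ‖q‖ < 1) {k l : ℕ} (hkl : k + l ≠ 0) :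
    theta (q ^ (k + l)) (q ^ k) = ∏' n : ℕ, (1 - q ^ ((k + l) * n + (k + l))) *
      (1 - q ^ ((k + l) * n + k)) * (1 - q ^ ((k + l) * n + l)) := by
  have hmul := multipliable_one_sub_pow_mul_add hq hkl
  rw [theta_pow_add_pow hq0 hq hkl, ((hmul _).mul (hmul k)).tprod_mul (hmul l),
    (hmul _).tprod_mul (hmul k)]
  simp only [qPochhammerInf_pow_pow]

end NormedField

end Theta

section Tiling

/-- The cells of the plus-shaped pentomino, whose translates by the index-`5` lattice spanned by
`(2, 1)` and `(-1, 2)` tile `ℤ × ℤ`. -/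
def plusCell : Fin 5 → ℤ × ℤ := ![(0, 0), (1, 0), (-1, 0), (0, 1), (0, -1)]

/-- The point of the cell `k` in the translate of the plus-shaped pentomino by
`i • (2, 1) + j • (-1, 2)`. -/
def plusTiling (p : Fin 5 × ℤ × ℤ) : ℤ × ℤ :=
  (2 * p.2.1 - p.2.2 + (plusCell p.1).1, p.2.1 + 2 * p.2.2 + (plusCell p.1).2)

lemma plusTiling_bijective : Function.Bijective plusTiling := by
  constructor
  · rintro ⟨k, i, j⟩ ⟨l, i', j'⟩ h
    fin_cases k <;> fin_cases l <;> simp [plusTiling, plusCell] at h ⊢ <;> lia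
  · rintro ⟨a, b⟩
    obtain ⟨k, hk⟩ : ∃ k, 5 ∣ a - 2 * b - ((plusCell k).1 - 2 * (plusCell k).2) := by
      have hmod : (a - 2 * b) % 5 = 0 ∨ (a - 2 * b) % 5 = 1 ∨ (a - 2 * b) % 5 = 2 ∨
          (a - 2 * b) % 5 = 3 ∨ (a - 2 * b) % 5 = 4 := by lia
      rcases hmod with h | h | h | h | h
      exacts [⟨0, by simp [plusCell]; lia⟩, ⟨1, by simp [plusCell]; lia⟩,
        ⟨4, by simp [plusCell]; lia⟩, ⟨3, by simp [plusCell]; lia⟩, ⟨2, by simp [plusCell]; lia⟩]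
    obtain ⟨j, hj⟩ := hk
    exact ⟨(k, b - (plusCell k).2 + 2 * j, -j), by simp only [plusTiling, Prod.mk.injEq]; lia⟩

lemma tsum_eq_sum_plusTiling {E : Type*} [AddCommGroup E] [UniformSpace E] [IsUniformAddGroup E]
    [CompleteSpace E] [T0Space E] {f : ℤ × ℤ → E} (hf : Summable f) :
    ∑' p, f p = ∑ k, ∑' p, f (plusTiling (k, p)) := by
  let e := Equiv.ofBijective plusTiling plusTiling_bijective
  have hsum : Summable fun p ↦ f (e p) := e.summable_iff.mpr hf
  rw [← e.tsum_eq f, hsum.tsum_prod, tsum_fintype]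
  rfl

end Tiling

section ThetaProduct

variable {𝕜 : Type*} [NormedField 𝕜] [CompleteSpace 𝕜] {q z w : 𝕜}

lemma tsum_thetaTerm_mul_plusTiling (hq0 : q ≠ 0) (hq : ‖q‖ < 1) (hz : z ≠ 0) (hw : w ≠ 0)
    (k : Fin 5) :
    ∑' p, thetaTerm q z (plusTiling (k, p)).1 * thetaTerm q w (plusTiling (k, p)).2 =
      thetaTerm q z (plusCell k).1 * thetaTerm q w (plusCell k).2 *
        (theta (q ^ 5) (q ^ (2 * (plusCell k).1 + (plusCell k).2 + 1) * z ^ 2 * w) *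
          theta (q ^ 5) (q ^ (2 * (plusCell k).2 - (plusCell k).1 + 2) * w ^ 2 / z)) := by
  have hsum {u : 𝕜} (hu : u ≠ 0) : Summable fun n ↦ ‖thetaTerm (q ^ 5) u n‖ :=
    summable_norm_thetaTerm (pow_ne_zero 5 hq0) (norm_pow_lt_one hq (by simp)) hu
  have hqz (n : ℤ) : q ^ n ≠ 0 := zpow_ne_zero n hq0
  rw [theta, theta, tsum_mul_tsum_of_summable_norm (hsum (by simp [hqz, hz, hw]))
    (hsum (by simp [hqz, hz, hw])), ← tsum_mul_left]
  exact tsum_congr fun p ↦ thetaTerm_mul_thetaTerm hq0 hz hw _ _ p.1 p.2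

theorem theta_mul_theta (hq0 : q ≠ 0) (hq : ‖q‖ < 1) (hz : z ≠ 0) (hw : w ≠ 0) :
    theta q z * theta q w =
      ∑ k, thetaTerm q z (plusCell k).1 * thetaTerm q w (plusCell k).2 *
        (theta (q ^ 5) (q ^ (2 * (plusCell k).1 + (plusCell k).2 + 1) * z ^ 2 * w) *
          theta (q ^ 5) (q ^ (2 * (plusCell k).2 - (plusCell k).1 + 2) * w ^ 2 / z)) := by
  have hz_sum := summable_norm_thetaTerm hq0 hq hz
  have hw_sum := summable_norm_thetaTerm hq0 hq hw
  have hsum : Summable fun p : ℤ × ℤ ↦ thetaTerm q z p.1 * thetaTerm q w p.2 :=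
    summable_mul_of_summable_norm hz_sum hw_sum
  calc theta q z * theta q w = ∑' p : ℤ × ℤ, thetaTerm q z p.1 * thetaTerm q w p.2 :=
        tsum_mul_tsum_of_summable_norm hz_sum hw_sum
    _ = ∑ k, ∑' p, thetaTerm q z (plusTiling (k, p)).1 * thetaTerm q w (plusTiling (k, p)).2 :=
        tsum_eq_sum_plusTiling hsum
    _ = _ := sum_congr rfl fun k _ ↦ tsum_thetaTerm_mul_plusTiling hq0 hq hz hw k

lemma theta_pow_three_sq (hq0 : q ≠ 0) (hq : ‖q‖ < 1) :
    theta (q ^ 3) q ^ 2 =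
      theta (q ^ 15) (q ^ 6) * (theta (q ^ 15) (q ^ 8) - q * theta (q ^ 15) (q ^ 2)) -
        q * theta (q ^ 15) (q ^ 3) * (theta (q ^ 15) (q ^ 11) + q * theta (q ^ 15) q) := by
  have hprod := theta_mul_theta (pow_ne_zero 3 hq0) (norm_pow_lt_one hq three_ne_zero) hq0 hq0
  have hzero : theta (q ^ 15) 1 = 0 :=
    theta_one (pow_ne_zero 15 hq0) (norm_pow_lt_one hq (by simp))
  have hsymm (k l : ℕ) (hkl : k + l = 15) : theta (q ^ 15) (q ^ k) = theta (q ^ 15) (q ^ l) := by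
    rw [← theta_div (pow_ne_zero 15 hq0), ← hkl, pow_add,
      mul_div_cancel_left₀ _ (pow_ne_zero k hq0)]
  have hexpand : theta (q ^ 3) q * theta (q ^ 3) q =
      theta (q ^ 15) (q ^ 6) * theta (q ^ 15) (q ^ 7)
      - q * (theta (q ^ 15) (q ^ 12) * theta (q ^ 15) (q ^ 4))
      - q ^ 2 * (theta (q ^ 15) 1 * theta (q ^ 15) (q ^ 10))
      - q * (theta (q ^ 15) (q ^ 9) * theta (q ^ 15) (q ^ 13))
      - q ^ 2 * (theta (q ^ 15) (q ^ 3) * theta (q ^ 15) q) := by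
    rw [hprod, Fin.sum_univ_five]
    simp only [plusCell, thetaTerm_zero, thetaTerm_one, thetaTerm_neg_one (pow_ne_zero 3 hq0),
      Matrix.cons_val]
    field_simp
    norm_num [hq0]
    ring_nf
  rw [sq, hexpand, hzero, hsymm 7 8 rfl, hsymm 12 3 rfl, hsymm 4 11 rfl, hsymm 9 6 rfl,
    hsymm 13 2 rfl]
  ring

end ThetaProduct

section RogersRamanujan

variable {x : ℂ}

lemma eulerPhi_eq_prod (hx : ‖x‖ < 1) {m : ℕ} (hm : m ≠ 0) :
    eulerPhi x = ∏ r ∈ range m, qPochhammerInf (x ^ (r + 1)) (x ^ m) := by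
  have hphi : eulerPhi x = qPochhammerInf x x := tprod_congr fun n ↦ by rw [pow_succ']
  simp only [hphi, qPochhammerInf_eq_prod x hx hm, pow_succ']

lemma eulerPhi_eq_theta (hx0 : x ≠ 0) (hx : ‖x‖ < 1) : eulerPhi x = theta (x ^ 3) x := by
  have htheta := theta_pow_add_pow hx0 hx (k := 1) (l := 2) (by simp)
  rw [pow_one] at htheta
  rw [htheta, eulerPhi_eq_prod hx three_ne_zero]
  simp only [prod_range_succ, prod_range_zero, zero_add, pow_one, Nat.reduceAdd]
  ring

lemma eulerPhi_mul_rrA (hx0 : x ≠ 0) (hx : ‖x‖ < 1) : eulerPhi x * rrA x = theta (x ^ 5) x := by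
  have htheta := theta_pow_add_pow hx0 hx (k := 1) (l := 4) (by simp)
  have hinv := qPochhammerInf_mul_tprod_inv hx (m := 5) (k := 3) (l := 2)
    (by simp) (by simp) (by simp)
  rw [pow_one] at htheta
  rw [htheta, eulerPhi_eq_prod hx (m := 5) (by simp), rrA]
  simp only [prod_range_succ, prod_range_zero, zero_add, pow_one, Nat.reduceAdd] at hinv ⊢
  linear_combination qPochhammerInf (x ^ 5) (x ^ 5) * qPochhammerInf x (x ^ 5) *
    qPochhammerInf (x ^ 4) (x ^ 5) * hinv

lemma eulerPhi_mul_rrB (hx0 : x ≠ 0) (hx : ‖x‖ < 1) :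
    eulerPhi x * rrB x = theta (x ^ 5) (x ^ 2) := by
  have htheta := theta_pow_add_pow hx0 hx (k := 2) (l := 3) (by simp)
  have hinv := qPochhammerInf_mul_tprod_inv hx (m := 5) (k := 4) (l := 1)
    (by simp) (by simp) (by simp)
  rw [htheta, eulerPhi_eq_prod hx (m := 5) (by simp), rrB]
  simp only [prod_range_succ, prod_range_zero, zero_add, pow_one, Nat.reduceAdd] at hinv ⊢
  linear_combination qPochhammerInf (x ^ 5) (x ^ 5) * qPochhammerInf (x ^ 2) (x ^ 5) *
    qPochhammerInf (x ^ 3) (x ^ 5) * hinv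

lemma Gf_eq_theta (hx0 : x ≠ 0) (hx : ‖x‖ < 1) :
    Gf x = theta (x ^ 15) (x ^ 8) - x * theta (x ^ 15) (x ^ 2) := by
  rw [Gf, theta_pow_add_pow_eq_tprod hx0 hx (k := 8) (l := 7) (by simp),
    theta_pow_add_pow_eq_tprod hx0 hx (k := 2) (l := 13) (by simp)]

lemma Hf_eq_theta (hx0 : x ≠ 0) (hx : ‖x‖ < 1) :
    Hf x = theta (x ^ 15) (x ^ 11) + x * theta (x ^ 15) x := by
  have htheta := theta_pow_add_pow_eq_tprod hx0 hx (k := 1) (l := 14) (by simp)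
  rw [pow_one] at htheta
  rw [Hf, theta_pow_add_pow_eq_tprod hx0 hx (k := 11) (l := 4) (by simp), htheta]

theorem eulerPhi_sq (hx : ‖x‖ < 1) :
    eulerPhi x ^ 2 =
      Gf x * eulerPhi (x ^ 3) * rrB (x ^ 3) - x * Hf x * eulerPhi (x ^ 3) * rrA (x ^ 3) := by
  rcases eq_or_ne x 0 with rfl | hx0
  · simp [eulerPhi, Gf, rrB]
  have hA := eulerPhi_mul_rrA (pow_ne_zero 3 hx0) (norm_pow_lt_one hx three_ne_zero)
  have hB := eulerPhi_mul_rrB (pow_ne_zero 3 hx0) (norm_pow_lt_one hx three_ne_zero)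
  simp only [← pow_mul, Nat.reduceMul] at hA hB
  rw [mul_assoc, hB, mul_assoc, hA, eulerPhi_eq_theta hx0 hx, theta_pow_three_sq hx0 hx,
    Gf_eq_theta hx0 hx, Hf_eq_theta hx0 hx]
  ring

end RogersRamanujan

theorem reduced_ramanujan_identity (q : ℂ) (hq : ‖q‖ < 1) :
    eulerPhi (q ^ 3) ^ 2 =
      Gf (q ^ 3) * eulerPhi (q ^ 9) * rrB (q ^ 9)
      - q ^ 3 * Hf (q ^ 3) * eulerPhi (q ^ 9) * rrA (q ^ 9) := by
  rw [pow_mul q 3 3]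
  exact eulerPhi_sq (norm_pow_lt_one hq three_ne_zero)
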